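/- arXiv:1904.09429 — 3 statements merged into one kernel-verified Lean document; each statement's English description precedes it below -/
import Mathlib

section
/- Let (Ω, μ) be a probability space, w ≥ 1, N ≥ 1. Let Z : Ω → (Fin N → ZMod (2^w)) be a measurable random vector and let Δ : Fin N → Ω → ZMod (2^w) be measurable random variables such that the family consisting of Z together with all the Δ i (indexed over Option (Fin N), with none ↦ Z and some i ↦ Δ i) is jointly independent (ProbabilityTheory.iIndepFun), and each Δ i is uniform, i.e. μ {ω | Δ i ω = d} = (2^w)⁻¹ for every d. Then for every tuple of targets x : Fin N → ZMod (2^w), μ {ω | ∀ i, Z ω i + Δ i ω = x i} = ((2^w)⁻¹)^N. -/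
/-!
Each delta has equal point masses, so its law is translation invariant. The deltas are independent,
so their joint law is the product of these laws and is translation invariant too. Convolving a
probability measure with a translation-invariant law returns the latter, so adding the independent
vector `Z` to the vector of deltas leaves the joint law of the deltas unchanged.
-/

open MeasureTheory ProbabilityTheory
open scoped ENNReal

/-- The family of codomains indexed by `Option (Fin N)`: `none` indexes the nominal
vector of `N` machine words, `some i` indexes the `i`-th compiler delta. -/
def TraceFam (w N : ℕ) : Option (Fin N) → Type :=
  fun o => match o with
  | none => Fin N → ZMod (2 ^ w)
  | some _ => ZMod (2 ^ w)

instance TraceFam.instMeasurableSpace (w N : ℕ) (o : Option (Fin N)) :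
    MeasurableSpace (TraceFam w N o) :=
  match o with
  | none => inferInstanceAs (MeasurableSpace (Fin N → ZMod (2 ^ w)))
  | some _ => inferInstanceAs (MeasurableSpace (ZMod (2 ^ w)))

section Convolution

variable {M : Type*} [Monoid M] [MeasurableSpace M] [MeasurableMul₂ M]

@[to_additive conv_eq_measure_univ_smul]
lemma mconv_eq_measure_univ_smul (μ ν : Measure M) [SFinite ν] [ν.IsMulLeftInvariant] :
    μ ∗ₘ ν = μ Set.univ • ν := by
  ext s hs
  calc (μ ∗ₘ ν) s = ∫⁻ m, ν ((m * ·) ⁻¹' s) ∂μ := by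
        rw [Measure.mconv, Measure.map_apply measurable_mul hs,
          Measure.prod_apply (measurable_mul hs)]
        rfl
    _ = ∫⁻ _, ν s ∂μ := lintegral_congr fun m ↦
        (measurePreserving_mul_left ν m).measure_preimage hs.nullMeasurableSet
    _ = (μ Set.univ • ν) s := by
        rw [lintegral_const, Measure.smul_apply, smul_eq_mul, mul_comm]

@[to_additive]
lemma hasLaw_mul_of_isMulLeftInvariant {Ω : Type*} [MeasurableSpace Ω] {P : Measure Ω}
    {ν : Measure M} [IsProbabilityMeasure ν] [ν.IsMulLeftInvariant] {X Y : Ω → M}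
    (hX : AEMeasurable X P) (hY : HasLaw Y ν P) (hXY : IndepFun X Y P) :
    HasLaw (X * Y) ν P := by
  have := hY.isProbabilityMeasure
  have := Measure.isProbabilityMeasure_map hX
  simpa [mconv_eq_measure_univ_smul] using hXY.hasLaw_mul ⟨hX, rfl⟩ hY

end Convolution

@[to_additive]
lemma isMulLeftInvariant_of_measure_singleton_eq {G : Type*} [Group G] [Countable G]
    [MeasurableSpace G] [MeasurableSingletonClass G] {ν : Measure G} {c : ℝ≥0∞}
    (h : ∀ g, ν {g} = c) : ν.IsMulLeftInvariant where
  map_mul_left_eq_self g := Measure.ext_of_singleton fun a ↦ by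
    rw [Measure.map_apply (measurable_const_mul g) (measurableSet_singleton a),
      Set.preimage_mul_left_singleton, h, h]

lemma indepFun_pi_of_notMem_range {Ω ι κ : Type*} [MeasurableSpace Ω] {μ : Measure Ω}
    {β : ι → Type*} [∀ i, MeasurableSpace (β i)] {f : ∀ i, Ω → β i} {i : ι} {g : κ → ι}
    (hf : iIndepFun f μ) (hmeas : ∀ i, Measurable (f i)) (hi : i ∉ Set.range g) :
    IndepFun (f i) (fun ω k ↦ f (g k) ω) μ := by
  have h := indep_iSup_of_disjoint (fun j ↦ (hmeas j).comap_le) hf.iIndep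
    (Set.disjoint_singleton_left.2 hi)
  rw [iSup_singleton, iSup_range] at h
  rw [IndepFun_iff_Indep]
  simpa only [MeasurableSpace.pi, MeasurableSpace.comap_iSup, MeasurableSpace.comap_comp,
    Function.comp_def] using h

theorem joint_independent_uniform_deltas_general {Ω ι : Type*} [MeasurableSpace Ω] {μ : Measure Ω}
    [Fintype ι] {G : ι → Type*} [∀ i, AddGroup (G i)] [∀ i, Countable (G i)]
    [∀ i, MeasurableSpace (G i)] [∀ i, MeasurableSingletonClass (G i)]
    {Z : Ω → ∀ i, G i} (hZ : AEMeasurable Z μ)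
    {Δ : ∀ i, Ω → G i} (hΔ : ∀ i, AEMeasurable (Δ i) μ)
    (hindep : iIndepFun Δ μ) (hZΔ : IndepFun Z (fun ω i ↦ Δ i ω) μ)
    {c : ι → ℝ≥0∞} (hunif : ∀ i g, μ {ω | Δ i ω = g} = c i) (x : ∀ i, G i) :
    μ {ω | ∀ i, Z ω i + Δ i ω = x i} = ∏ i, c i := by
  have := hindep.isProbabilityMeasure
  have prob (i : ι) : IsProbabilityMeasure (μ.map (Δ i)) := Measure.isProbabilityMeasure_map (hΔ i)
  have mass (i : ι) (g : G i) : μ.map (Δ i) {g} = c i := by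
    rw [Measure.map_apply_of_aemeasurable (hΔ i) (measurableSet_singleton g)]
    exact hunif i g
  have invariant (i : ι) : (μ.map (Δ i)).IsAddLeftInvariant :=
    isAddLeftInvariant_of_measure_singleton_eq (mass i)
  have law_delta : HasLaw (fun ω i ↦ Δ i ω) (Measure.pi fun i ↦ μ.map (Δ i)) μ :=
    ⟨aemeasurable_pi_lambda _ hΔ, hindep.map_fun_eq_pi_map hΔ⟩
  have law_sum := hasLaw_add_of_isAddLeftInvariant hZ law_delta hZΔ
  calc μ {ω | ∀ i, Z ω i + Δ i ω = x i}
      = Measure.pi (fun i ↦ μ.map (Δ i)) {x} := by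
        simpa only [← funext_iff] using!
          law_sum.measure_eq (p := (· = x)) (measurableSet_singleton x)
    _ = ∏ i, c i := by simp only [Measure.pi_singleton, mass]

/-- The probabilistic content of the paper's Theorem 1: if `N` observed trace values are
each the nominal value `Z · i` offset by a compiler delta `Δ i`, where the deltas are
uniform and the whole family (the nominal vector `Z` together with all deltas, indexed
over `Option (Fin N)`) is jointly independent, then any prescribed tuple of `N` observed
`w`-bit values has probability `(2^w)⁻¹ ^ N`. -/
theorem joint_independent_uniform_deltas
    {Ω : Type*} [MeasurableSpace Ω] (μ : Measure Ω) [IsProbabilityMeasure μ]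
    (w N : ℕ) (hw : 1 ≤ w) (hN : 1 ≤ N)
    (Z : Ω → (Fin N → ZMod (2 ^ w))) (hZ : Measurable Z)
    (Δ : Fin N → Ω → ZMod (2 ^ w)) (hΔ : ∀ i, Measurable (Δ i))
    (hindep :
      iIndepFun (m := fun o => TraceFam.instMeasurableSpace w N o)
        (fun o : Option (Fin N) =>
          (match o with
            | none => Z
            | some i => Δ i : Ω → TraceFam w N o))
        μ)
    (hunif : ∀ (i : Fin N) (d : ZMod (2 ^ w)),
      μ {ω | Δ i ω = d} = ((2 : ℝ≥0∞) ^ w)⁻¹)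
    (x : Fin N → ZMod (2 ^ w)) :
    μ {ω | ∀ i, Z ω i + Δ i ω = x i} = (((2 : ℝ≥0∞) ^ w)⁻¹) ^ N := by
  have hindepΔ : iIndepFun Δ μ := hindep.precomp (g := some) (Option.some_injective _)
  have hZΔ : IndepFun Z (fun ω i ↦ Δ i ω) μ :=
    indepFun_pi_of_notMem_range (i := none) (g := some) hindep (Option.rec hZ hΔ)
      (by simp)
  simpa using joint_independent_uniform_deltas_general hZ.aemeasurable
    (fun i ↦ (hΔ i).aemeasurable) hindepΔ hZΔ hunif x
end

section
/- Let (Ω, μ) be a probability space, n ≥ 1, m ≥ 1. Let Δ : Fin m → Ω → ZMod (2^n) be measurable random variables that are jointly independent (ProbabilityTheory.iIndepFun) and each uniform, i.e. μ {ω | Δ i ω = d} = (2^n)⁻¹ for every d. For each i : Fin m let F i : (Fin i.val → ZMod (2^n)) → ZMod (2^n) be an arbitrary function, and define random variables X i : Ω → ZMod (2^n) by strong recursion: X i ω = F i (fun j : Fin i.val => X ⟨j.val, j.val.lt_of_lt_of_le (le_of_lt i.isLt) ▸ (j.isLt.trans i.isLt)⟩ ω) + Δ i ω (each X i is the value computed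 from the earlier trace entries plus a fresh delta). Then the joint distribution of (X i) is uniform on (Fin m → ZMod (2^n)): for every x : Fin m → ZMod (2^n), μ {ω | ∀ i, X i ω = x i} = ((2^n)⁻¹)^m. -/
open MeasureTheory ProbabilityTheory
open scoped ENNReal

/-!
A trace determines the deltas that produced it, `Δ i = -F i (X 0, …, X (i - 1)) + X i`, and forward
substitution shows that the deltas determine the trace. Hence the event that the trace is `x` is the
event that the deltas take the constant values read off from `x`, and independence turns its
probability into a product.
-/

section Triangular

variable {ι : Type*} [Preorder ι] {G : ι → Type*} [∀ i, AddGroup (G i)]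

/-- The compiler deltas read off from a trace `x`: the unique `δ` such that each word `x i` is
`F i`, applied to the words at positions strictly below `i`, plus `δ i`. Positions need only be
preordered, and words at different positions may lie in different groups. -/
def traceDelta (F : ∀ i, (∀ j : Set.Iio i, G j) → G i) (x : ∀ i, G i) (i : ι) : G i :=
  -F i (fun j => x j) + x i

theorem traceDelta_eq_iff {F : ∀ i, (∀ j : Set.Iio i, G j) → G i} {x δ : ∀ i, G i} :
    traceDelta F x = δ ↔ ∀ i, x i = F i (fun j => x j) + δ i := by
  simp only [funext_iff, traceDelta, neg_add_eq_iff_eq_add]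

theorem traceDelta_injective [WellFoundedLT ι] (F : ∀ i, (∀ j : Set.Iio i, G j) → G i) :
    Function.Injective (traceDelta F) := by
  intro x y hxy
  funext i
  induction i using WellFoundedLT.induction with
  | _ i ih =>
    have hpast : (fun j : Set.Iio i => x j) = fun j : Set.Iio i => y j :=
      funext fun j => ih j j.2
    have hi : -F i (fun j => x j) + x i = -F i (fun j => y j) + y i := congrFun hxy i
    rw [hpast] at hi
    exact add_left_cancel hi

end Triangular

theorem measure_forall_eq_of_iIndepFun {Ω ι : Type*} [MeasurableSpace Ω] {μ : Measure Ω}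
    [Fintype ι] {β : ι → Type*} [∀ i, MeasurableSpace (β i)] [∀ i, MeasurableSingletonClass (β i)]
    {Y : ∀ i, Ω → β i} (hY : iIndepFun Y μ) (y : ∀ i, β i) :
    μ {ω | ∀ i, Y i ω = y i} = ∏ i, μ {ω | Y i ω = y i} := by
  rw [Set.ofPred_forall]
  exact hY.meas_iInter fun i => ⟨{y i}, measurableSet_singleton _, rfl⟩

theorem straight_line_trace_uniform_general {Ω ι : Type*} [MeasurableSpace Ω] {μ : Measure Ω}
    [Fintype ι] [Preorder ι] {G : ι → Type*} [∀ i, AddGroup (G i)] [∀ i, MeasurableSpace (G i)]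
    [∀ i, MeasurableSingletonClass (G i)] {Δ : ∀ i, Ω → G i} (hindep : iIndepFun Δ μ)
    (F : ∀ i, (∀ j : Set.Iio i, G j) → G i) {X : ∀ i, Ω → G i}
    (hX : ∀ i ω, X i ω = F i (fun j => X j ω) + Δ i ω) (x : ∀ i, G i) :
    μ {ω | ∀ i, X i ω = x i} = ∏ i, μ {ω | Δ i ω = traceDelta F x i} := by
  have hΔ (ω : Ω) : traceDelta F (X · ω) = (Δ · ω) := traceDelta_eq_iff.2 (hX · ω)
  have hevent (ω : Ω) : (∀ i, X i ω = x i) ↔ ∀ i, Δ i ω = traceDelta F x i := by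
    rw [← funext_iff, ← (traceDelta_injective F).eq_iff, hΔ, funext_iff]
  simp only [hevent, measure_forall_eq_of_iIndepFun hindep]

/-- The paper's Proposition on maximal trace entropy: in a straight-line trace each
written value `X i` equals an arbitrary function `F i` of the earlier trace entries
plus a fresh, jointly independent, uniformly random compiler delta `Δ i`; then the
whole `m`-word trace is uniformly distributed on `(Fin m → ZMod (2^n))`. -/
theorem straight_line_trace_uniform
    {Ω : Type*} [MeasurableSpace Ω] (μ : Measure Ω) [IsProbabilityMeasure μ]
    (n m : ℕ) (hn : 1 ≤ n) (hm : 1 ≤ m)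
    (Δ : Fin m → Ω → ZMod (2 ^ n)) (hΔmeas : ∀ i, Measurable (Δ i))
    (hindep : iIndepFun (m := fun _ => inferInstance) Δ μ)
    (hunif : ∀ (i : Fin m) (d : ZMod (2 ^ n)),
      μ {ω | Δ i ω = d} = ((2 : ℝ≥0∞) ^ n)⁻¹)
    (F : ∀ i : Fin m, (Fin i.val → ZMod (2 ^ n)) → ZMod (2 ^ n))
    (X : Fin m → Ω → ZMod (2 ^ n))
    (hX : ∀ (i : Fin m) (ω : Ω),
      X i ω =
        F i (fun j : Fin i.val => X ⟨j.val, lt_trans j.isLt i.isLt⟩ ω) + Δ i ω)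
    (x : Fin m → ZMod (2 ^ n)) :
    μ {ω | ∀ i, X i ω = x i} = (((2 : ℝ≥0∞) ^ n)⁻¹) ^ m := by
  rw [straight_line_trace_uniform_general hindep
    (fun i past => F i fun j => past ⟨⟨j, j.isLt.trans i.isLt⟩, j.isLt⟩) hX x]
  simp only [hunif, Finset.prod_const, Finset.card_univ, Fintype.card_fin]
end

section
/- For every n ≥ 1 and every constant k : ZMod (2^n), the number of operand pairs (x, y) : ZMod (2^n) × ZMod (2^n) for which the signed comparison test succeeds — i.e., for which the two's-complement interpretation of x − (y + k) is negative, meaning 2^(n−1) ≤ (x − (y + k)).val — equals 2^(2n−1), exactly half of all 2^(2n) pairs. -/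
/-! For each fixed `y`, the translation `x ↦ x - (y + k)` permutes `ZMod (2 ^ n)`, so the test
succeeds for as many `x` as there are negative words, namely those with representatives in
`[2 ^ (n - 1), 2 ^ n)`. -/

lemma ncard_setOf_equiv_apply_mem {α β γ : Type*} (e : γ → α ≃ β) (s : Set β) :
    {p : α × γ | e p.2 p.1 ∈ s}.ncard = s.ncard * Nat.card γ := by
  have hpreimage :
      {p : α × γ | e p.2 p.1 ∈ s} = Equiv.prodCongrLeft e ⁻¹' (s ×ˢ Set.univ) := by
    ext p
    simp
  rw [hpreimage,
    Set.ncard_preimage_of_injective_subset_range (Equiv.injective _) (by simp),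
    Set.ncard_prod, Set.ncard_univ]

lemma range_zmod_val (m : ℕ) [NeZero m] : Set.range (ZMod.val : ZMod m → ℕ) = Set.Iio m := by
  ext a
  exact ⟨fun ⟨z, hz⟩ ↦ hz ▸ z.val_lt, fun ha ↦ ⟨a, ZMod.val_cast_of_lt ha⟩⟩

lemma ncard_setOf_le_zmod_val (m a : ℕ) [NeZero m] : {z : ZMod m | a ≤ z.val}.ncard = m - a :=
  calc {z : ZMod m | a ≤ z.val}.ncard
      = (ZMod.val '' (ZMod.val ⁻¹' Set.Ici a : Set (ZMod m))).ncard :=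
        (Set.ncard_image_of_injective _ (ZMod.val_injective m)).symm
    _ = (Set.Ico a m).ncard := by
        rw [Set.image_preimage_eq_inter_range, range_zmod_val, Set.Ici_inter_Iio]
    _ = m - a := Set.ncard_Ico_nat a m

theorem branch_test_half_of_pairs_general {γ : Type*} {m : ℕ} [NeZero m] (a : ℕ)
    (f : γ → ZMod m) :
    {p : ZMod m × γ | a ≤ (p.1 - f p.2).val}.ncard = (m - a) * Nat.card γ := by
  rw [← ncard_setOf_le_zmod_val m a]
  exact ncard_setOf_equiv_apply_mem (fun y ↦ Equiv.subRight (f y)) {z | a ≤ z.val}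

/-- The paper's claim on the contestable equals: for the signed comparison branch test
`x [<] y + k`, exactly half of all `2^(2n)` operand pairs `(x, y)` make the test
succeed, i.e. make the two's-complement interpretation of `x - (y + k)` negative. -/
theorem branch_test_half_of_pairs (n : ℕ) (hn : 1 ≤ n) (k : ZMod (2 ^ n)) :
    Set.ncard {p : ZMod (2 ^ n) × ZMod (2 ^ n) |
        2 ^ (n - 1) ≤ (p.1 - (p.2 + k)).val} = 2 ^ (2 * n - 1) := by
  rw [branch_test_half_of_pairs_general (2 ^ (n - 1)) (· + k), Nat.card_zmod,
    Nat.two_pow_sub_two_pow_pred hn, ← pow_add, show n - 1 + n = 2 * n - 1 by lia]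
end
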